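/- arXiv:1705.00957 — 3 statements merged into one kernel-verified Lean document; each statement's English description precedes it below -/
import Mathlib

section
/- For every integer N ≥ 2, set h = 2N−2 and ρ = (N−1, N−2, …, 1, 0). Then for every real q with 0 < q < 1: (∑ over k ∈ ℤ^N with k_1+…+k_N even of q^((1/2)·∑_{i=1}^N (k_i + (N−i)/h)²)) / ∏_{k=1}^∞ (1−q^k)^N equals q^((∑_{i=1}^N (N−i)²)/(2h²)) / ( ∏_{j=1}^{N−1} ∏_{k=1}^∞ (1 − q^(k − (2j−1)/(2N−2))) · ∏_{k=1}^∞ (1 − q^(k − 1/2)) ). -/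
open scoped BigOperators

lemma aux_summable_rpow (q : ℝ) (hq0 : 0 < q) (hq1 : q < 1) (b c : ℝ) (hb : 0 < b) :
    Summable fun n : ℕ => q ^ (b * (n : ℝ) + c) := by
  have h : ∀ n : ℕ, q ^ (b * (n : ℝ) + c) = (q ^ b) ^ n * q ^ c := by
    intro n
    rw [Real.rpow_add hq0, Real.rpow_mul hq0.le, Real.rpow_natCast]
  simp_rw [h]
  exact (summable_geometric_of_lt_one (Real.rpow_nonneg hq0.le _)
    (Real.rpow_lt_one hq0.le hq1 hb)).mul_right _

lemma aux_mult_add {f : ℕ → ℝ} (hf : Summable f) : Multipliable fun n => 1 + f n :=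
  Real.multipliable_one_add_of_summable hf

lemma aux_mult_sub {f : ℕ → ℝ} (hf : Summable f) : Multipliable fun n => 1 - f n := by
  simpa [sub_eq_add_neg] using Real.multipliable_one_add_of_summable hf.neg

lemma aux_sub_ne {f : ℕ → ℝ} (hf : Summable f) (h : ∀ n, f n < 1) :
    ∏' n, (1 - f n) ≠ 0 := by
  have := tprod_one_add_ne_zero_of_summable (f := fun n => - f n)
    (fun n => by have := h n; linarith) (by simpa using hf.abs)
  simpa [sub_eq_add_neg] using this

lemma aux_summable_pow (q : ℝ) (hq0 : 0 < q) (hq1 : q < 1) :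
    Summable fun n : ℕ => q ^ (n + 1) :=
  (summable_nat_add_iff 1).2 (summable_geometric_of_lt_one hq0.le hq1)

/-- finite Pochhammer -/
noncomputable def poch (q : ℝ) (n : ℕ) : ℝ := ∏ i ∈ Finset.range n, (1 - q ^ (i + 1))

noncomputable def pinv (q : ℝ) (j : ℤ) : ℝ := if j < 0 then 0 else (poch q j.toNat)⁻¹

noncomputable def wt (q a : ℝ) (k : ℤ) : ℝ := q ^ ((k : ℝ) ^ 2 / 2 + k * a)

lemma aux_fac_pos (q : ℝ) (hq0 : 0 < q) (hq1 : q < 1) (n : ℕ) : 0 < 1 - q ^ (n + 1) := by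
  have := pow_lt_one₀ hq0.le hq1 (Nat.succ_ne_zero n)
  simpa using this

lemma poch_pos (q : ℝ) (hq0 : 0 < q) (hq1 : q < 1) (n : ℕ) : 0 < poch q n :=
  Finset.prod_pos fun i _ => aux_fac_pos q hq0 hq1 i

lemma pinv_rec (q : ℝ) (hq0 : 0 < q) (hq1 : q < 1) (j : ℤ) :
    pinv q (j - 1) = pinv q j * (1 - q ^ j) := by
  rcases lt_trichotomy j 0 with h | h | h
  · simp [pinv, h, show j - 1 < 0 by omega]
  · subst h; simp [pinv]
  · obtain ⟨n, rfl⟩ : ∃ n : ℕ, j = n + 1 := ⟨(j - 1).toNat, by omega⟩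
    have h1 : ¬ ((n : ℤ) + 1 < 0) := by omega
    have h2 : ((n : ℤ) + 1).toNat = n + 1 := by omega
    have h3 := (aux_fac_pos q hq0 hq1 n).ne'
    have h4 := (poch_pos q hq0 hq1 n).ne'
    simp only [pinv, add_sub_cancel_right, h1, h2, if_false, Int.toNat_natCast]
    rw [if_neg (by omega)]
    have : poch q (n+1) = poch q n * (1 - q ^ (n+1)) := Finset.prod_range_succ _ _
    rw [this]
    have h5 : (q : ℝ) ^ ((n : ℤ) + 1) = q ^ (n + 1) := by norm_cast
    rw [h5]
    field_simp

lemma finite_jtp (q : ℝ) (hq0 : 0 < q) (hq1 : q < 1) (a : ℝ) (m : ℕ) :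
    HasSum (fun k : ℤ => poch q (2 * m) * (pinv q (m + k) * pinv q (m - k)) * wt q a k)
      (∏ n ∈ Finset.range m, ((1 + q ^ ((n : ℝ) + (1 / 2 + a))) * (1 + q ^ ((n : ℝ) + (1 / 2 - a))))) := by
  induction m with
  | zero =>
    have := hasSum_ite_eq (0 : ℤ) (1 : ℝ)
    simp only [Finset.range_zero, Finset.prod_empty]
    convert this using 2 with k
    by_cases h : k = 0
    · subst h; simp [poch, pinv, wt]
    · rw [if_neg h]
      rcases lt_or_gt_of_ne h with h | h
      · simp [pinv, h]
      · simp [pinv, h]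
  | succ m ih =>
    rw [Finset.prod_range_succ]
    have i1 := ((Equiv.addRight (-1 : ℤ)).hasSum_iff.2 ih).mul_left (q ^ ((m : ℝ) + (1 / 2 + a)))
    have i2 := ((Equiv.addRight (1 : ℤ)).hasSum_iff.2 ih).mul_left (q ^ ((m : ℝ) + (1 / 2 - a)))
    have i3 := ih.mul_left (1 + q ^ (2 * m + 1))
    have i4 := (i3.add i1).add i2
    have hprod : q ^ ((m : ℝ) + (1 / 2 + a)) * q ^ ((m : ℝ) + (1 / 2 - a)) = q ^ (2 * m + 1) := by
      rw [← Real.rpow_add hq0, ← Real.rpow_natCast]; congr 1; push_cast; ring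
    convert i4 using 1
    · rfl
    · funext k
      simp only [Function.comp_apply, Equiv.coe_addRight]
      have e1 : q ^ ((m : ℝ) + (1 / 2 + a)) * wt q a (k + -1) = wt q a k * q ^ ((m : ℤ) + 1 - k) := by
        rw [wt, wt, ← Real.rpow_intCast, ← Real.rpow_add hq0, ← Real.rpow_add hq0]
        congr 1; push_cast; ring
      have e2 : q ^ ((m : ℝ) + (1 / 2 - a)) * wt q a (k + 1) = wt q a k * q ^ ((m : ℤ) + 1 + k) := by
        rw [wt, wt, ← Real.rpow_intCast, ← Real.rpow_add hq0, ← Real.rpow_add hq0]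
        congr 1; push_cast; ring
      have f1 := pinv_rec q hq0 hq1 (m + 1 + k)
      have f2 := pinv_rec q hq0 hq1 (m + 1 - k)
      have f3 := pinv_rec q hq0 hq1 (m + k)
      have f4 := pinv_rec q hq0 hq1 (m - k)
      rw [show (m : ℤ) + 1 + k - 1 = m + k by ring] at f1
      rw [show (m : ℤ) + 1 - k - 1 = m - k by ring] at f2
      have g1 : q ^ ((m : ℤ) + k) = q ^ ((m : ℤ) + 1 + k) / q := by
        rw [div_eq_mul_inv, ← zpow_sub_one₀ hq0.ne']; congr 1; ring
      have g2 : q ^ ((m : ℤ) - k) = q ^ ((m : ℤ) + 1 - k) / q := by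
        rw [div_eq_mul_inv, ← zpow_sub_one₀ hq0.ne']; congr 1; ring
      have g3 : q ^ (2 * m + 1) = q ^ ((m : ℤ) + 1 + k) * q ^ ((m : ℤ) + 1 - k) / q := by
        rw [← zpow_add₀ hq0.ne', div_eq_mul_inv, ← zpow_sub_one₀ hq0.ne', ← zpow_natCast]; congr 1; push_cast; ring
      have g4 : poch q (2 * (m + 1)) = poch q (2 * m) * (1 - q ^ (2 * m + 1)) * (1 - q ^ (2 * m + 1) * q) := by
        rw [← pow_succ]
        show poch q (2 * m + 1 + 1) = _
        rw [poch, Finset.prod_range_succ, Finset.prod_range_succ]; rfl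
      rw [show (m : ℤ) + (k + -1) = m + k - 1 by ring, show (m : ℤ) - (k + -1) = m + 1 - k by ring,
        show (m : ℤ) + (k + 1) = m + 1 + k by ring, show (m : ℤ) - (k + 1) = m - k - 1 by ring]
      push_cast
      rw [f3, f4, g1, g2, f1, f2, g4, g3]
      have hq := hq0.ne'
      generalize q ^ ((m : ℤ) + 1 + k) = X at *
      generalize q ^ ((m : ℤ) + 1 - k) = Y at *
      generalize pinv q ((m : ℤ) + 1 + k) = A at *
      generalize pinv q ((m : ℤ) + 1 - k) = B at *
      generalize poch q (2 * m) = P at *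
      have t1 : ∀ Z : ℝ, q ^ ((m : ℝ) + (1 / 2 + a)) * (Z * wt q a (k + -1)) = Z * (wt q a k * Y) := by
        intro Z; rw [← e1]; ring
      have t2 : ∀ Z : ℝ, q ^ ((m : ℝ) + (1 / 2 - a)) * (Z * wt q a (k + 1)) = Z * (wt q a k * X) := by
        intro Z; rw [← e2]; ring
      rw [t1, t2]
      field_simp
      ring
    · rw [← hprod]; ring

lemma poch_tendsto (q : ℝ) (hq0 : 0 < q) (hq1 : q < 1) :
    Filter.Tendsto (poch q) Filter.atTop (nhds (∏' n : ℕ, (1 - q ^ (n + 1)))) :=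
  (aux_mult_sub (aux_summable_pow q hq0 hq1)).tendsto_prod_tprod_nat

lemma euler_ne (q : ℝ) (hq0 : 0 < q) (hq1 : q < 1) : ∏' n : ℕ, (1 - q ^ (n + 1)) ≠ 0 :=
  aux_sub_ne (aux_summable_pow q hq0 hq1) fun n => by linarith [aux_fac_pos q hq0 hq1 n]

lemma poch_anti (q : ℝ) (hq0 : 0 < q) (hq1 : q < 1) : Antitone (poch q) := by
  apply antitone_nat_of_succ_le
  intro n
  have : poch q (n+1) = poch q n * (1 - q ^ (n+1)) := Finset.prod_range_succ _ _
  rw [this]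
  have := poch_pos q hq0 hq1 n
  have := pow_pos hq0 (n+1)
  nlinarith

lemma euler_le (q : ℝ) (hq0 : 0 < q) (hq1 : q < 1) (n : ℕ) :
    ∏' n : ℕ, (1 - q ^ (n + 1)) ≤ poch q n :=
  (poch_anti q hq0 hq1).le_of_tendsto (poch_tendsto q hq0 hq1) n

lemma euler_pos (q : ℝ) (hq0 : 0 < q) (hq1 : q < 1) : 0 < ∏' n : ℕ, (1 - q ^ (n + 1)) :=
  lt_of_le_of_ne (ge_of_tendsto' (poch_tendsto q hq0 hq1) fun n => (poch_pos q hq0 hq1 n).le)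
    (euler_ne q hq0 hq1).symm

lemma pinv_nonneg (q : ℝ) (hq0 : 0 < q) (hq1 : q < 1) (j : ℤ) : 0 ≤ pinv q j := by
  unfold pinv
  split_ifs
  · exact le_rfl
  · exact inv_nonneg.2 (poch_pos q hq0 hq1 _).le

lemma pinv_le (q : ℝ) (hq0 : 0 < q) (hq1 : q < 1) (j : ℤ) :
    pinv q j ≤ (∏' n : ℕ, (1 - q ^ (n + 1)))⁻¹ := by
  have := euler_pos q hq0 hq1
  unfold pinv
  split_ifs
  · positivity
  · exact inv_anti₀ this (euler_le q hq0 hq1 _)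

lemma pinv_tendsto (q : ℝ) (hq0 : 0 < q) (hq1 : q < 1) (k : ℤ) :
    Filter.Tendsto (fun m : ℕ => pinv q (m + k)) Filter.atTop
      (nhds (∏' n : ℕ, (1 - q ^ (n + 1)))⁻¹) := by
  have h1 : Filter.Tendsto (fun m : ℕ => ((m : ℤ) + k).toNat) Filter.atTop Filter.atTop := by
    apply Filter.tendsto_atTop.2
    intro b
    filter_upwards [Filter.eventually_ge_atTop (b + k.natAbs)] with m hm
    omega
  have h2 := ((poch_tendsto q hq0 hq1).comp h1).inv₀ (euler_ne q hq0 hq1)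
  refine h2.congr' ?_
  filter_upwards [Filter.eventually_ge_atTop k.natAbs] with m hm
  simp only [Function.comp_apply, pinv]
  rw [if_neg (by omega)]

lemma wt_pos (q : ℝ) (hq0 : 0 < q) (a : ℝ) (k : ℤ) : 0 < wt q a k := Real.rpow_pos_of_pos hq0 _

lemma wt_summable (q : ℝ) (hq0 : 0 < q) (hq1 : q < 1) (a : ℝ) : Summable (wt q a) := by
  have hl : Real.log q < 0 := Real.log_neg hq0 hq1
  have hpi := Real.pi_pos
  refine (summable_pow_mul_jacobiTheta₂_term_bound (|a| * (-Real.log q) / (2 * Real.pi))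
    (T := -Real.log q / (2 * Real.pi)) (div_pos (by linarith) (by linarith)) 0).of_norm_bounded ?_
  intro k
  rw [Real.norm_of_nonneg (wt_pos q hq0 a k).le, wt, Real.rpow_def_of_pos hq0]
  simp only [pow_zero, one_mul]
  apply Real.exp_le_exp.2
  have h1 : -((k : ℝ) * a) ≤ |a| * |(k : ℝ)| := by
    rw [← abs_mul, mul_comm]; exact neg_le_abs _
  have h2 : -Real.pi * (-Real.log q / (2 * Real.pi) * (k : ℝ) ^ 2 - 2 * (|a| * -Real.log q / (2 * Real.pi)) * |(k : ℝ)|)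
    = Real.log q * ((k : ℝ) ^ 2 / 2 - |a| * |(k : ℝ)|) := by field_simp; ring
  push_cast
  rw [h2]
  nlinarith

lemma jtp_wt (q : ℝ) (hq0 : 0 < q) (hq1 : q < 1) (a : ℝ) :
    ∑' k : ℤ, wt q a k = (∏' n : ℕ, (1 - q ^ (n + 1))) *
      ((∏' n : ℕ, (1 + q ^ ((n : ℝ) + (1 / 2 + a)))) * ∏' n : ℕ, (1 + q ^ ((n : ℝ) + (1 / 2 - a)))) := by
  set E := ∏' n : ℕ, (1 - q ^ (n + 1)) with hE
  have hEp : 0 < E := euler_pos q hq0 hq1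
  have hs : ∀ c : ℝ, Summable fun n : ℕ => q ^ ((n : ℝ) + c) := fun c => by
    simpa using aux_summable_rpow q hq0 hq1 1 c one_pos
  have m1 := aux_mult_add (hs (1 / 2 + a))
  have m2 := aux_mult_add (hs (1 / 2 - a))
  have L1 := (m1.mul m2).tendsto_prod_tprod_nat
  rw [m1.tprod_mul m2] at L1
  have L2 : Filter.Tendsto (fun m : ℕ => ∑' k : ℤ, poch q (2 * m) * (pinv q (m + k) * pinv q (m - k)) * wt q a k)
      Filter.atTop (nhds (∑' k : ℤ, E * (E⁻¹ * E⁻¹) * wt q a k)) := by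
    refine tendsto_tsum_of_dominated_convergence (bound := fun k => 1 * (E⁻¹ * E⁻¹) * wt q a k)
      ((wt_summable q hq0 hq1 a).mul_left _) ?_ ?_
    · intro k
      have p1 : Filter.Tendsto (fun m : ℕ => poch q (2 * m)) Filter.atTop (nhds E) :=
        (poch_tendsto q hq0 hq1).comp (Filter.tendsto_id.const_mul_atTop' two_pos)
      have p2 := pinv_tendsto q hq0 hq1 k
      have p3 := pinv_tendsto q hq0 hq1 (-k)
      simp only [← sub_eq_add_neg] at p3
      exact (p1.mul (p2.mul p3)).mul_const _
    · refine Filter.Eventually.of_forall fun m k => ?_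
      have b0 := poch_pos q hq0 hq1 (2 * m)
      have b1 : poch q (2 * m) ≤ 1 := by
        have := poch_anti q hq0 hq1 (Nat.zero_le (2 * m)); simpa [poch] using this
      have b2 := pinv_nonneg q hq0 hq1 (m + k)
      have b3 := pinv_nonneg q hq0 hq1 (m - k)
      have b4 := wt_pos q hq0 a k
      have b5 := pinv_le q hq0 hq1 (m + k)
      have b6 := pinv_le q hq0 hq1 (m - k)
      rw [Real.norm_of_nonneg (by positivity)]
      gcongr
  simp_rw [(finite_jtp q hq0 hq1 a _).tsum_eq] at L2
  have := tendsto_nhds_unique L1 L2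
  rw [this, tsum_mul_left]
  field_simp

lemma th_eq (q : ℝ) (hq0 : 0 < q) (a : ℝ) (k : ℤ) :
    q ^ ((1 / 2 : ℝ) * ((k : ℝ) + a) ^ 2) = q ^ (a ^ 2 / 2) * wt q a k := by
  rw [wt, ← Real.rpow_add hq0]; congr 1; ring

/-- Euler identity. -/
lemma euler_odd (y : ℝ) (hy0 : 0 < y) (hy1 : y < 1) :
    (∏' n : ℕ, (1 + y ^ (n + 1))) * ∏' n : ℕ, (1 - y ^ (2 * n + 1)) = 1 := by
  have s := aux_summable_pow y hy0 hy1
  have s1 : Summable fun n : ℕ => y ^ (2 * n + 1) :=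
    s.comp_injective (i := fun n => 2 * n) (fun a b h => by simpa using h)
  have s2 : Summable fun n : ℕ => y ^ (2 * n + 1 + 1) :=
    s.comp_injective (i := fun n => 2 * n + 1) (fun a b h => by simpa using h)
  have h1 := (aux_mult_add s).tprod_mul (aux_mult_sub s)
  have h2 := tprod_even_mul_odd (f := fun n => 1 - y ^ (n + 1)) (aux_mult_sub s1) (aux_mult_sub s2)
  have h3 : ∀ n : ℕ, (1 + y ^ (n + 1)) * (1 - y ^ (n + 1)) = 1 - y ^ (2 * n + 1 + 1) := by
    intro n; ring
  simp_rw [h3] at h1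
  rw [← h2] at h1
  have h4 : ∏' n : ℕ, (1 - y ^ (2 * n + 1 + 1)) ≠ 0 := aux_sub_ne s2 fun n => by
    linarith [aux_fac_pos y hy0 hy1 (2 * n + 1)]
  apply mul_right_cancel₀ h4
  rw [one_mul, mul_assoc]; exact h1.symm

/-- splitting by residues -/
lemma tprod_residue (f : ℕ → ℝ) (M : ℕ) (hM : 0 < M) (hf : Multipliable f)
    (hf' : ∀ j < M, Multipliable fun k => f (M * k + j)) :
    ∏' r, f r = ∏ j ∈ Finset.range M, ∏' k, f (M * k + j) := by
  have L1 : Filter.Tendsto (fun n => ∏ i ∈ Finset.range (M * n), f i) Filter.atTop (nhds (∏' r, f r)) :=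
    hf.tendsto_prod_tprod_nat.comp (Filter.tendsto_id.const_mul_atTop' hM)
  have L2 : Filter.Tendsto (fun n => ∏ j ∈ Finset.range M, ∏ k ∈ Finset.range n, f (M * k + j))
      Filter.atTop (nhds (∏ j ∈ Finset.range M, ∏' k, f (M * k + j))) :=
    tendsto_finsetProd _ fun j hj => (hf' j (Finset.mem_range.1 hj)).tendsto_prod_tprod_nat
  refine tendsto_nhds_unique L1 (L2.congr fun n => ?_)
  rw [Finset.prod_comm]
  induction n with
  | zero => simp
  | succ n ih => rw [Finset.prod_range_succ, ih, Nat.mul_succ, Finset.prod_range_add]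

lemma hasSum_pi (n : ℕ) (f : Fin n → ℤ → ℝ) (hf : ∀ i, Summable fun k => ‖f i k‖) :
    (Summable fun k : Fin n → ℤ => ‖∏ i, f i (k i)‖) ∧
    ∑' k : Fin n → ℤ, ∏ i, f i (k i) = ∏ i, ∑' k, f i k := by
  induction n with
  | zero =>
    refine ⟨(hasSum_fintype _).summable, by simp⟩
  | succ n ih =>
    obtain ⟨h1, h2⟩ := ih (fun i => f i.succ) fun i => hf _
    have e := Fin.consEquiv (fun _ : Fin (n+1) => ℤ)
    constructor
    · rw [← (Fin.consEquiv (fun _ : Fin (n+1) => ℤ)).summable_iff]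
      refine ((hf 0).mul_norm h1).congr ?_
      intro x
      simp [Fin.consEquiv, Fin.prod_univ_succ]
    · rw [← (Fin.consEquiv (fun _ : Fin (n+1) => ℤ)).tsum_eq, Fin.prod_univ_succ, ← h2,
        tsum_mul_tsum_of_summable_norm (hf 0) h1]
      refine tsum_congr fun x => ?_
      simp [Fin.consEquiv, Fin.prod_univ_succ]

noncomputable def cpr (x : ℝ) (M s : ℕ) : ℝ := ∏' n : ℕ, (1 + x ^ (2 * M * n + s))

lemma sum_arith (x : ℝ) (hx0 : 0 < x) (hx1 : x < 1) (M : ℕ) (hM : 0 < M) (s : ℕ) :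
    Summable fun n : ℕ => x ^ (M * n + s) :=
  (summable_geometric_of_lt_one hx0.le hx1).comp_injective (i := fun n => M * n + s)
    (fun a b h => by simpa [hM.ne'] using h)

lemma comb_even (x : ℝ) (hx0 : 0 < x) (hx1 : x < 1) (M : ℕ) (hM : 0 < M) :
    cpr x M 0 * cpr x M M = 2 * ∏' r : ℕ, (1 + (x ^ M) ^ (r + 1)) := by
  have hM2 : 0 < 2 * M := by omega
  have s := sum_arith x hx0 hx1 (2 * M) hM2
  have h0 : cpr x M 0 = 2 * ∏' n : ℕ, (1 + x ^ (2 * M * n + 2 * M)) := by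
    rw [cpr, tprod_eq_zero_mul']
    · norm_num
      rfl
    · exact aux_mult_add (s (2 * M))
  have h1 := tprod_even_mul_odd (f := fun r => 1 + (x ^ M) ^ (r + 1))
    ((aux_mult_add (s M)).congr fun n => by rw [← pow_mul]; congr 2; ring)
    ((aux_mult_add (s (2 * M))).congr fun n => by rw [← pow_mul]; congr 2; ring)
  rw [← h1, h0, cpr]
  have e1 : ∀ n : ℕ, (x ^ M) ^ (2 * n + 1) = x ^ (2 * M * n + M) := fun n => by
    rw [← pow_mul]; congr 1; ring
  have e2 : ∀ n : ℕ, (x ^ M) ^ (2 * n + 1 + 1) = x ^ (2 * M * n + 2 * M) := fun n => by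
    rw [← pow_mul]; congr 1; ring
  simp_rw [e1, e2]
  ring

lemma comb (x : ℝ) (hx0 : 0 < x) (hx1 : x < 1) (M : ℕ) (hM : 0 < M) :
    (∏ m ∈ Finset.range (M + 1), cpr x M (M + m)) * ∏ m ∈ Finset.range (M + 1), cpr x M (M - m) =
      2 * ((∏' r : ℕ, (1 + x ^ (r + 1))) * ∏' r : ℕ, (1 + (x ^ M) ^ (r + 1))) := by
  have hM2 : 0 < 2 * M := by omega
  have s := sum_arith x hx0 hx1 (2 * M) hM2
  have h1 : ∏ m ∈ Finset.range (M + 1), cpr x M (M - m) = ∏ m ∈ Finset.range (M + 1), cpr x M m := by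
    rw [← Finset.prod_range_reflect]
    refine Finset.prod_congr rfl fun m hm => ?_
    have := Finset.mem_range.1 hm
    congr 1; omega
  have h2 := tprod_residue (fun r => 1 + x ^ (r + 1)) (2 * M) hM2
    (aux_mult_add (aux_summable_pow x hx0 hx1)) (fun j _ => aux_mult_add (s (j + 1)))
  have h3 : ∏ j ∈ Finset.range (2 * M), ∏' k : ℕ, (1 + x ^ (2 * M * k + j + 1)) =
      ∏ j ∈ Finset.range (M + M), cpr x M (j + 1) := by rw [two_mul]; simp only [cpr, two_mul, add_assoc]
  rw [h1, h2, h3, Finset.prod_range_add _ M M, Finset.prod_range_succ' (fun m => cpr x M (M + m)),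
    Finset.prod_range_succ' (fun m => cpr x M m)]
  have := comb_even x hx0 hx1 M hM
  simp only [add_zero, ← add_assoc]
  linear_combination ((∏ k ∈ Finset.range M, cpr x M (M + k + 1)) * ∏ k ∈ Finset.range M, cpr x M (k + 1)) * this

lemma odd_prod (x : ℝ) (hx0 : 0 < x) (hx1 : x < 1) (M : ℕ) (hM : 0 < M) :
    ∏ j ∈ Finset.range M, ∏' k : ℕ, (1 - x ^ (2 * M * k + 2 * (M - 1 - j) + 1)) =
      ∏' r : ℕ, (1 - x ^ (2 * r + 1)) := by
  have hM2 : 0 < 2 * M := by omega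
  have s := sum_arith x hx0 hx1 (2 * M) hM2
  rw [tprod_residue (fun r => 1 - x ^ (2 * r + 1)) M hM
    (aux_mult_sub (sum_arith x hx0 hx1 2 two_pos 1))
    (fun j _ => (aux_mult_sub (s (2 * j + 1))).congr fun n => by congr 2; ring),
    ← Finset.prod_range_reflect]
  refine Finset.prod_congr rfl fun m hm => tprod_congr fun k => ?_
  have := Finset.mem_range.1 hm
  rw [show M - 1 - (M - 1 - m) = m by omega]
  congr 2; ring

lemma even_half (N : ℕ) (f : Fin N → ℤ → ℝ) (hf : ∀ i, Summable fun k => ‖f i k‖) (i₀ : Fin N)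
    (h0 : ∀ k, f i₀ (-1 - k) = f i₀ k) :
    ∑' k : {k : Fin N → ℤ // Even (∑ i, k i)}, ∏ i, f i (k.1 i) = (1 / 2) * ∏ i, ∑' k, f i k := by
  obtain ⟨s1, t1⟩ := hasSum_pi N f hf
  obtain ⟨s2, t2⟩ := hasSum_pi N (fun i k => (-1 : ℝ) ^ k * f i k) (fun i => by simpa using hf i)
  have hz : ∑' k, (-1 : ℝ) ^ k * f i₀ k = 0 := by
    have h := (Equiv.subLeft (-1 : ℤ)).tsum_eq (fun k => (-1 : ℝ) ^ k * f i₀ k)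
    have h' : ∀ k : ℤ, (-1 : ℝ) ^ ((Equiv.subLeft (-1 : ℤ)) k) * f i₀ ((Equiv.subLeft (-1 : ℤ)) k) =
        - ((-1 : ℝ) ^ k * f i₀ k) := by
      intro k
      simp only [Equiv.subLeft_apply, h0]
      rw [zpow_sub₀ (by norm_num)]
      rcases Int.even_or_odd k with hk | hk
      · simp [hk.neg_one_zpow]
      · simp [hk.neg_one_zpow]
    simp_rw [h', tsum_neg] at h
    linarith
  rw [Finset.prod_eq_zero (Finset.mem_univ i₀) hz] at t2
  have := tsum_subtype {k : Fin N → ℤ | Even (∑ i, k i)} (fun k => ∏ i, f i (k i))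
  refine this.trans ?_
  have key : ∀ k : Fin N → ℤ, Set.indicator {k : Fin N → ℤ | Even (∑ i, k i)} (fun k => ∏ i, f i (k i)) k
      = (1 / 2) * (∏ i, f i (k i) + ∏ i, ((-1 : ℝ) ^ (k i) * f i (k i))) := by
    intro k
    have hp : ∏ i, (-1 : ℝ) ^ (k i) = (-1) ^ (∑ i, k i) := by
      have : ∀ s : Finset (Fin N), ∏ i ∈ s, (-1 : ℝ) ^ (k i) = (-1) ^ (∑ i ∈ s, k i) := by
        intro s
        induction s using Finset.induction_on with
        | empty => simp
        | insert a s ha ih => rw [Finset.prod_insert ha, Finset.sum_insert ha, ih, zpow_add₀ (by norm_num)]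
      exact this _
    rw [Finset.prod_mul_distrib, hp]
    by_cases hk : Even (∑ i, k i)
    · rw [Set.indicator_of_mem (by exact hk), hk.neg_one_zpow]; ring
    · rw [Set.indicator_of_notMem (by exact hk), (Int.not_even_iff_odd.1 hk).neg_one_zpow]; ring
  simp_rw [key]
  rw [tsum_mul_left, (s1.of_norm).tsum_add s2.of_norm, t1, t2, add_zero]

/-- Macdonald identity for `D_N` from the principal specialization of the
    Weyl–Kac character formula: with `h = 2N−2` and `ρ = (N−1,…,1,0)`,
    `Θ_{D_N}(ρ/h;q) / ∏(1−q^k)^N = q^{(ρ,ρ)/(2h²)} /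
      (∏_{j=1}^{N−1}∏_{k≥1}(1−q^{k−(2j−1)/(2N−2)}) · ∏_{k≥1}(1−q^{k−1/2}))`. -/
theorem stmt9 (N : ℕ) (hN : 2 ≤ N) (q : ℝ) (hq0 : 0 < q) (hq1 : q < 1) :
    (∑' k : {k : Fin N → ℤ // Even (∑ i, k i)},
        q ^ ((1 / 2 : ℝ) * ∑ i : Fin N,
          ((k.1 i : ℝ) + ((N : ℝ) - 1 - (i.val : ℝ)) / (2 * (N : ℝ) - 2)) ^ 2)) /
      ∏' k : ℕ, (1 - q ^ (k + 1)) ^ N =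
      q ^ ((∑ i : Fin N, ((N : ℝ) - 1 - (i.val : ℝ)) ^ 2) / (2 * (2 * (N : ℝ) - 2) ^ 2)) /
        ((∏ j ∈ Finset.range (N - 1),
            ∏' k : ℕ, (1 - q ^ (((k : ℝ) + 1) - (2 * ((j : ℝ) + 1) - 1) / (2 * (N : ℝ) - 2)))) *
          ∏' k : ℕ, (1 - q ^ ((k : ℝ) + 1 / 2))) := by
  obtain ⟨M, rfl⟩ : ∃ M, N = M + 1 := ⟨N - 1, by omega⟩
  have hM : 0 < M := by omega
  have hMr : (0 : ℝ) < M := by exact_mod_cast hM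
  set x : ℝ := q ^ (1 / (2 * (M : ℝ))) with hx
  have hx0 : 0 < x := Real.rpow_pos_of_pos hq0 _
  have hx1 : x < 1 := Real.rpow_lt_one hq0.le hq1 (by positivity)
  have hy0 : 0 < x ^ M := pow_pos hx0 _
  have hy1 : x ^ M < 1 := pow_lt_one₀ hx0.le hx1 hM.ne'
  have conv : ∀ (n : ℕ) (c : ℝ), c = n / (2 * (M : ℝ)) → q ^ c = x ^ n := by
    intro n c hc
    rw [hx, ← Real.rpow_natCast, ← Real.rpow_mul hq0.le, hc]
    congr 1; ring
  have hN2 : 2 * ((M + 1 : ℕ) : ℝ) - 2 = 2 * M := by push_cast; ring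
  rw [hN2]
  set E := ∏' n : ℕ, (1 - q ^ (n + 1)) with hE
  have hE0 : E ≠ 0 := euler_ne q hq0 hq1
  have hden : ∏' k : ℕ, (1 - q ^ (k + 1)) ^ (M + 1) = E ^ (M + 1) :=
    (aux_mult_sub (aux_summable_pow q hq0 hq1)).tprod_pow _
  rw [hden]
  have hR1 : ∏ j ∈ Finset.range (M + 1 - 1),
      ∏' k : ℕ, (1 - q ^ (((k : ℝ) + 1) - (2 * ((j : ℝ) + 1) - 1) / (2 * (M : ℝ)))) =
      ∏' r : ℕ, (1 - x ^ (2 * r + 1)) := by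
    rw [← odd_prod x hx0 hx1 M hM, Nat.add_sub_cancel]
    refine Finset.prod_congr rfl fun j hj => tprod_congr fun k => ?_
    congr 1
    apply conv
    have hj' := Finset.mem_range.1 hj
    obtain ⟨d, rfl⟩ : ∃ d, M = j + 1 + d := ⟨M - j - 1, by omega⟩
    rw [show j + 1 + d - 1 - j = d by omega]
    push_cast at hMr ⊢
    field_simp
    ring
  have hR2 : ∏' k : ℕ, (1 - q ^ ((k : ℝ) + 1 / 2)) = ∏' r : ℕ, (1 - (x ^ M) ^ (2 * r + 1)) := by
    refine tprod_congr fun k => ?_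
    rw [← pow_mul]
    congr 1
    apply conv
    push_cast
    field_simp
  rw [hR1, hR2]
  set a : ℕ → ℝ := fun m => (m : ℝ) / (2 * M) with ha
  have hT : ∀ b : ℝ, ∑' k : ℤ, q ^ ((1 / 2 : ℝ) * ((k : ℝ) + b) ^ 2) = q ^ (b ^ 2 / 2) * (E *
      ((∏' n : ℕ, (1 + q ^ ((n : ℝ) + (1 / 2 + b)))) * ∏' n : ℕ, (1 + q ^ ((n : ℝ) + (1 / 2 - b))))) := by
    intro b
    simp_rw [th_eq q hq0 b]
    rw [tsum_mul_left, jtp_wt q hq0 hq1 b]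
  have hTm : ∀ m ∈ Finset.range (M + 1), ∑' k : ℤ, q ^ ((1 / 2 : ℝ) * ((k : ℝ) + a m) ^ 2) =
      q ^ ((a m) ^ 2 / 2) * (E * (cpr x M (M + m) * cpr x M (M - m))) := by
    intro m hm
    have hm' := Finset.mem_range.1 hm
    rw [hT]
    congr 3
    · refine tprod_congr fun n => ?_
      congr 1
      apply conv
      simp only [ha]; push_cast; field_simp
    · refine tprod_congr fun n => ?_
      congr 1
      apply conv
      simp only [ha]; rw [Nat.cast_add, Nat.cast_sub (by omega)]; push_cast; field_simp
  have hcoef : ∀ i : Fin (M + 1), (((M + 1 : ℕ) : ℝ) - 1 - (i.val : ℝ)) / (2 * (M : ℝ)) = a (M - i.val) := by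
    intro i
    simp only [ha]
    rw [Nat.cast_sub (by omega)]; push_cast; ring
  have hS : ∑' k : {k : Fin (M + 1) → ℤ // Even (∑ i, k i)},
        q ^ ((1 / 2 : ℝ) * ∑ i : Fin (M + 1),
          ((k.1 i : ℝ) + (((M + 1 : ℕ) : ℝ) - 1 - (i.val : ℝ)) / (2 * (M : ℝ))) ^ 2) =
      (1 / 2) * ∏ i : Fin (M + 1), ∑' k : ℤ, q ^ ((1 / 2 : ℝ) * ((k : ℝ) + a (M - i.val)) ^ 2) := by
    rw [← even_half (M + 1) (fun i k => q ^ ((1 / 2 : ℝ) * ((k : ℝ) + a (M - i.val)) ^ 2)) ?_ 0 ?_]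
    · refine tsum_congr fun k => ?_
      rw [← Real.rpow_sum_of_pos hq0, Finset.mul_sum]
      simp_rw [hcoef]
    · intro i
      simp_rw [th_eq q hq0]
      exact ((wt_summable q hq0 hq1 _).mul_left _).norm
    · intro k
      congr 2
      simp only [ha, Fin.val_zero, Nat.sub_zero]
      push_cast
      field_simp
      ring
  have hprod : ∏ i : Fin (M + 1), ∑' k : ℤ, q ^ ((1 / 2 : ℝ) * ((k : ℝ) + a (M - i.val)) ^ 2) =
      ∏ m ∈ Finset.range (M + 1), (q ^ ((a m) ^ 2 / 2) * (E * (cpr x M (M + m) * cpr x M (M - m)))) := by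
    rw [← Finset.prod_range_reflect, ← Finset.prod_range (fun i => ∑' k : ℤ, q ^ ((1 / 2 : ℝ) * ((k : ℝ) + a (M - i)) ^ 2))]
    refine Finset.prod_congr rfl fun m hm => ?_
    have hm' := Finset.mem_range.1 hm
    rw [Nat.add_sub_cancel, hTm (M - m) (Finset.mem_range.2 (by omega))]
  have hexp : (∑ i : Fin (M + 1), (((M + 1 : ℕ) : ℝ) - 1 - (i.val : ℝ)) ^ 2) / (2 * (2 * (M : ℝ)) ^ 2) =
      ∑ m ∈ Finset.range (M + 1), (a m) ^ 2 / 2 := by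
    rw [← Finset.sum_range_reflect, Finset.sum_div, Finset.sum_range]
    refine Finset.sum_congr rfl fun i _ => ?_
    rw [Nat.add_sub_cancel, ← hcoef]
    field_simp
  rw [hS, hprod, hexp, Real.rpow_sum_of_pos hq0, Finset.prod_mul_distrib, Finset.prod_mul_distrib,
    Finset.prod_mul_distrib, comb x hx0 hx1 M hM, Finset.prod_const, Finset.card_range]
  have o1 := euler_odd x hx0 hx1
  have o2 := euler_odd (x ^ M) hy0 hy1
  have n1 := right_ne_zero_of_mul_eq_one o1
  have n2 := right_ne_zero_of_mul_eq_one o2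
  rw [div_eq_div_iff (pow_ne_zero _ hE0) (mul_ne_zero n1 n2)]
  generalize ∏' n : ℕ, (1 + x ^ (n + 1)) = P1 at *
  generalize ∏' n : ℕ, (1 - x ^ (2 * n + 1)) = O1 at *
  generalize ∏' n : ℕ, (1 + (x ^ M) ^ (n + 1)) = P2 at *
  generalize ∏' n : ℕ, (1 - (x ^ M) ^ (2 * n + 1)) = O2 at *
  generalize ∏ m ∈ Finset.range (M + 1), q ^ ((a m) ^ 2 / 2) = W
  linear_combination (W * E ^ (M + 1)) * (P2 * O2) * o1 + (W * E ^ (M + 1)) * o2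
end

section
/- For every integer N ≥ 2 and every real q with 0 < q < 1: (∑ over n ∈ ℤ^N of q^((1/2)·∑_{j=1}^N (n_j + (N−j+1)/(2N))²)) · ∏_{k=1}^∞ (1 + q^(k−1/2)) / ∏_{k=1}^∞ (1−q^k)^N equals q^((N+1)(2N+1)/(48N)) · 2 · ∏_{k=1}^∞ (1 + q^k) / ∏_{k=1}^∞ (1 − q^((2k−1)/(2N))). -/
open scoped BigOperators
open Filter Topology

/-- finite q-Pochhammer -/
noncomputable def jtpP (q : ℝ) (m : ℕ) : ℝ := ∏ k ∈ Finset.range m, (1 - q ^ (k + 1))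

/-- reciprocal q-Pochhammer, zero at negative indices -/
noncomputable def jtpR (q : ℝ) (m : ℤ) : ℝ := if m < 0 then 0 else (jtpP q m.toNat)⁻¹

lemma one_sub_pow_pos' {q : ℝ} (h0 : 0 < q) (h1 : q < 1) (k : ℕ) : 0 < 1 - q ^ (k + 1) := by
  have : q ^ (k + 1) < 1 := pow_lt_one₀ h0.le h1 (Nat.succ_ne_zero k)
  linarith

lemma jtpP_pos {q : ℝ} (h0 : 0 < q) (h1 : q < 1) (m : ℕ) : 0 < jtpP q m :=
  Finset.prod_pos fun k _ => one_sub_pow_pos' h0 h1 k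

lemma jtpR_rec {q : ℝ} (h0 : 0 < q) (h1 : q < 1) (m : ℤ) :
    jtpR q (m - 1) = (1 - q ^ (m : ℝ)) * jtpR q m := by
  unfold jtpR
  rcases lt_trichotomy m 0 with h | h | h
  · rw [if_pos (by omega), if_pos h]; simp
  · subst h; simp
  · rw [if_neg (by omega), if_neg (by omega)]
    obtain ⟨k, rfl⟩ : ∃ k : ℕ, m = k + 1 := ⟨(m - 1).toNat, by omega⟩
    have e1 : ((k : ℤ) + 1 - 1).toNat = k := by omega
    have e2 : ((k : ℤ) + 1).toNat = k + 1 := by omega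
    rw [e1, e2]
    have e3 : q ^ (((k : ℤ) + 1 : ℤ) : ℝ) = q ^ (k + 1) := by
      rw [← Real.rpow_natCast]; push_cast; rfl
    rw [e3]
    have e4 : jtpP q (k + 1) = jtpP q k * (1 - q ^ (k + 1)) := Finset.prod_range_succ _ _
    rw [e4]
    have := (jtpP_pos h0 h1 k).ne'
    have := (one_sub_pow_pos' h0 h1 k).ne'
    field_simp

lemma jtp_summable_pow {q : ℝ} (h0 : 0 < q) (h1 : q < 1) :
    Summable fun k : ℕ => ‖-q ^ (k + 1)‖ := by
  have : Summable fun k : ℕ => q ^ (k + 1) :=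
    (summable_nat_add_iff 1).2 (summable_geometric_of_lt_one h0.le h1)
  simpa [abs_of_pos h0] using this

lemma jtp_multipliable_sub {q : ℝ} (h0 : 0 < q) (h1 : q < 1) :
    Multipliable fun k : ℕ => 1 - q ^ (k + 1) := by
  simpa [sub_eq_add_neg] using multipliable_one_add_of_summable (jtp_summable_pow h0 h1)

lemma jtp_ne_zero {q : ℝ} (h0 : 0 < q) (h1 : q < 1) :
    ∏' k : ℕ, (1 - q ^ (k + 1)) ≠ 0 := by
  have := tprod_one_add_ne_zero_of_summable (f := fun k : ℕ => -q ^ (k + 1))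
    (fun i => by have := one_sub_pow_pos' h0 h1 i; rw [← sub_eq_add_neg]; exact this.ne')
    (jtp_summable_pow h0 h1)
  simpa [sub_eq_add_neg] using this

lemma jtpP_tendsto {q : ℝ} (h0 : 0 < q) (h1 : q < 1) :
    Tendsto (jtpP q) atTop (𝓝 (∏' k : ℕ, (1 - q ^ (k + 1)))) :=
  (jtp_multipliable_sub h0 h1).hasProd.tendsto_prod_nat

lemma jtpP_anti {q : ℝ} (h0 : 0 < q) (h1 : q < 1) : Antitone (jtpP q) := by
  apply antitone_nat_of_succ_le
  intro n
  have e4 : jtpP q (n + 1) = jtpP q n * (1 - q ^ (n + 1)) := Finset.prod_range_succ _ _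
  rw [e4]
  have := jtpP_pos h0 h1 n
  have : 0 < q ^ (n + 1) := pow_pos h0 _
  nlinarith

lemma jtpP_lim_le {q : ℝ} (h0 : 0 < q) (h1 : q < 1) (m : ℕ) :
    ∏' k : ℕ, (1 - q ^ (k + 1)) ≤ jtpP q m :=
  (jtpP_anti h0 h1).le_of_tendsto (jtpP_tendsto h0 h1) m

lemma jtp_lim_pos {q : ℝ} (h0 : 0 < q) (h1 : q < 1) :
    0 < ∏' k : ℕ, (1 - q ^ (k + 1)) :=
  lt_of_le_of_ne (ge_of_tendsto' (jtpP_tendsto h0 h1) fun m => (jtpP_pos h0 h1 m).le)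
    (jtp_ne_zero h0 h1).symm

lemma jtpR_nonneg {q : ℝ} (h0 : 0 < q) (h1 : q < 1) (m : ℤ) : 0 ≤ jtpR q m := by
  unfold jtpR
  split_ifs
  · rfl
  · exact inv_nonneg.2 (jtpP_pos h0 h1 _).le

lemma jtpR_le {q : ℝ} (h0 : 0 < q) (h1 : q < 1) (m : ℤ) :
    jtpR q m ≤ (∏' k : ℕ, (1 - q ^ (k + 1)))⁻¹ := by
  unfold jtpR
  split_ifs
  · exact inv_nonneg.2 (jtp_lim_pos h0 h1).le
  · exact inv_anti₀ (jtp_lim_pos h0 h1) (jtpP_lim_le h0 h1 _)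

lemma jtpR_tendsto {q : ℝ} (h0 : 0 < q) (h1 : q < 1) (j : ℤ) :
    Tendsto (fun n : ℕ => jtpR q (n + j)) atTop (𝓝 (∏' k : ℕ, (1 - q ^ (k + 1)))⁻¹) := by
  have h : Tendsto (fun n : ℕ => ((n : ℤ) + j).toNat) atTop atTop := by
    apply tendsto_atTop_mono (f := fun n : ℕ => n - j.natAbs)
    · intro n; omega
    · exact tendsto_sub_atTop_nat _
  refine (((jtpP_tendsto h0 h1).comp h).inv₀ (jtp_ne_zero h0 h1)).congr' ?_
  filter_upwards [eventually_ge_atTop j.natAbs] with n hn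
  simp only [jtpR, Function.comp]
  rw [if_neg (by omega)]

lemma jtp_step {q : ℝ} (h0 : 0 < q) (h1 : q < 1) (a : ℝ) (n : ℕ) (j : ℤ) :
    jtpP q (2 * (n + 1)) * jtpR q (((n + 1 : ℕ) : ℤ) - j) * jtpR q (((n + 1 : ℕ) : ℤ) + j)
        * q ^ ((1 / 2 : ℝ) * ((j : ℝ) + a) ^ 2) =
      (1 + q ^ (2 * n + 1)) * (jtpP q (2 * n) * jtpR q ((n : ℤ) - j) * jtpR q ((n : ℤ) + j)
        * q ^ ((1 / 2 : ℝ) * ((j : ℝ) + a) ^ 2)) +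
      q ^ ((n : ℝ) + 1 / 2 + a) * (jtpP q (2 * n) * jtpR q ((n : ℤ) - (j + -1)) *
        jtpR q ((n : ℤ) + (j + -1)) * q ^ ((1 / 2 : ℝ) * (((j + -1 : ℤ) : ℝ) + a) ^ 2)) +
      q ^ ((n : ℝ) + 1 / 2 - a) * (jtpP q (2 * n) * jtpR q ((n : ℤ) - (j + 1)) *
        jtpR q ((n : ℤ) + (j + 1)) * q ^ ((1 / 2 : ℝ) * (((j + 1 : ℤ) : ℝ) + a) ^ 2)) := by
  have g1 : q ^ ((n : ℝ) + 1 / 2 + a) * q ^ ((1 / 2 : ℝ) * (((j + -1 : ℤ) : ℝ) + a) ^ 2) =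
      q ^ (((n + 1 - j : ℤ)) : ℝ) * q ^ ((1 / 2 : ℝ) * ((j : ℝ) + a) ^ 2) := by
    rw [← Real.rpow_add h0, ← Real.rpow_add h0]; congr 1; push_cast; ring
  have g2 : q ^ ((n : ℝ) + 1 / 2 - a) * q ^ ((1 / 2 : ℝ) * (((j + 1 : ℤ) : ℝ) + a) ^ 2) =
      q ^ (((n + 1 + j : ℤ)) : ℝ) * q ^ ((1 / 2 : ℝ) * ((j : ℝ) + a) ^ 2) := by
    rw [← Real.rpow_add h0, ← Real.rpow_add h0]; congr 1; push_cast; ring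
  have p1 : jtpP q (2 * (n + 1)) = jtpP q (2 * n) * (1 - q ^ (2 * n + 1)) * (1 - q ^ (2 * n + 2)) := by
    show jtpP q (2 * n + 1 + 1) = _
    unfold jtpP
    rw [Finset.prod_range_succ, Finset.prod_range_succ]
  have rA := jtpR_rec h0 h1 ((n : ℤ) + 1 - j)
  have rB := jtpR_rec h0 h1 ((n : ℤ) + 1 + j)
  have rA2 := jtpR_rec h0 h1 ((n : ℤ) + 1 - j - 1)
  have rB2 := jtpR_rec h0 h1 ((n : ℤ) + 1 + j - 1)
  have s1 : q ^ (((n : ℤ) + 1 - j - 1 : ℤ) : ℝ) = q ^ (((n + 1 - j : ℤ)) : ℝ) / q := by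
    push_cast; rw [Real.rpow_sub_one h0.ne']
  have s2 : q ^ (((n : ℤ) + 1 + j - 1 : ℤ) : ℝ) = q ^ (((n + 1 + j : ℤ)) : ℝ) / q := by
    push_cast; rw [Real.rpow_sub_one h0.ne']
  have s3 : q ^ (2 * n + 2) = q ^ (((n + 1 - j : ℤ)) : ℝ) * q ^ (((n + 1 + j : ℤ)) : ℝ) := by
    rw [← Real.rpow_add h0, ← Real.rpow_natCast]; congr 1; push_cast; ring
  have s4 : q ^ (2 * n + 1) = q ^ (2 * n + 2) / q := by
    field_simp; ring
  rw [s1, rA] at rA2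
  rw [s2, rB] at rB2
  have i1 : (((n + 1 : ℕ) : ℤ) - j) = (n : ℤ) + 1 - j := by push_cast; ring
  have i2 : (((n + 1 : ℕ) : ℤ) + j) = (n : ℤ) + 1 + j := by push_cast; ring
  have i3 : ((n : ℤ) - j) = (n : ℤ) + 1 - j - 1 := by ring
  have i4 : ((n : ℤ) + j) = (n : ℤ) + 1 + j - 1 := by ring
  have i5 : ((n : ℤ) - (j + -1)) = (n : ℤ) + 1 - j := by ring
  have i6 : ((n : ℤ) + (j + -1)) = (n : ℤ) + 1 + j - 1 - 1 := by ring
  have i7 : ((n : ℤ) - (j + 1)) = (n : ℤ) + 1 - j - 1 - 1 := by ring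
  have i8 : ((n : ℤ) + (j + 1)) = (n : ℤ) + 1 + j := by ring
  rw [i1, i2, i3, i4, i5, i6, i7, i8, rA2, rB2, rA, rB, p1, s4, s3]
  generalize q ^ ((1 / 2 : ℝ) * ((j : ℝ) + a) ^ 2) = g at *
  generalize q ^ ((1 / 2 : ℝ) * (((j + 1 : ℤ) : ℝ) + a) ^ 2) = g' at *
  generalize q ^ ((1 / 2 : ℝ) * (((j + -1 : ℤ) : ℝ) + a) ^ 2) = g'' at *
  generalize jtpR q ((n : ℤ) + 1 - j) = A at *
  generalize jtpR q ((n : ℤ) + 1 + j) = B at *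
  generalize q ^ (((n + 1 - j : ℤ)) : ℝ) = u at *
  generalize q ^ (((n + 1 + j : ℤ)) : ℝ) = v at *
  generalize q ^ ((n : ℝ) + 1 / 2 + a) = w1 at *
  generalize q ^ ((n : ℝ) + 1 / 2 - a) = w2 at *
  generalize jtpP q (2 * n) = p at *
  have hq := h0.ne'
  linear_combination (exp := 1) (-(p * A * ((1 - v / q) * ((1 - v) * B)))) * g1 -
    (p * B * ((1 - u / q) * ((1 - u) * A))) * g2 

lemma jtp_finite {q : ℝ} (h0 : 0 < q) (h1 : q < 1) (a : ℝ) (n : ℕ) :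
    HasSum (fun j : ℤ => jtpP q (2 * n) * jtpR q ((n : ℤ) - j) * jtpR q ((n : ℤ) + j)
        * q ^ ((1 / 2 : ℝ) * ((j : ℝ) + a) ^ 2))
      (q ^ ((1 / 2 : ℝ) * a ^ 2) * ((∏ k ∈ Finset.range n, (1 + q ^ ((k : ℝ) + 1 / 2 + a))) *
        ∏ k ∈ Finset.range n, (1 + q ^ ((k : ℝ) + 1 / 2 - a)))) := by
  induction n with
  | zero =>
    have := hasSum_single (f := fun j : ℤ => jtpP q (2 * 0) * jtpR q (((0 : ℕ) : ℤ) - j) *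
      jtpR q (((0 : ℕ) : ℤ) + j) * q ^ ((1 / 2 : ℝ) * ((j : ℝ) + a) ^ 2)) 0 (by
        intro j hj
        rcases lt_or_gt_of_ne hj with h | h
        · have : jtpR q (((0 : ℕ) : ℤ) + j) = 0 := if_pos (by simpa using h)
          simp only [this]; simp
        · have : jtpR q (((0 : ℕ) : ℤ) - j) = 0 := if_pos (by simpa using h)
          simp only [this]; simp)
    convert this using 1
    simp [jtpR, jtpP]
  | succ n ih =>
    have h2 := (Equiv.addRight (-1 : ℤ)).hasSum_iff.2 ih
    have h3 := (Equiv.addRight (1 : ℤ)).hasSum_iff.2 ih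
    have := ((ih.mul_left (1 + q ^ (2 * n + 1))).add (h2.mul_left (q ^ ((n : ℝ) + 1 / 2 + a)))).add
      (h3.mul_left (q ^ ((n : ℝ) + 1 / 2 - a)))
    have hf := funext (jtp_step h0 h1 a n)
    rw [hf]
    refine Eq.subst (motive := fun z => HasSum _ z) ?_ this
    · rw [Finset.prod_range_succ, Finset.prod_range_succ]
      have : q ^ (2 * n + 1) = q ^ ((n : ℝ) + 1 / 2 + a) * q ^ ((n : ℝ) + 1 / 2 - a) := by
        rw [← Real.rpow_add h0, ← Real.rpow_natCast]; congr 1; push_cast; ring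
      rw [this]; ring

lemma jtp_summable_gauss {q : ℝ} (h0 : 0 < q) (h1 : q < 1) (a : ℝ) :
    Summable fun j : ℤ => q ^ ((1 / 2 : ℝ) * ((j : ℝ) + a) ^ 2) := by
  have hl : 0 < -Real.log q := by have := Real.log_neg h0 h1; linarith
  have hpi := Real.pi_pos
  have := (summable_pow_mul_jacobiTheta₂_term_bound (|a| * (-Real.log q) / (2 * Real.pi))
    (T := -Real.log q / (2 * Real.pi)) (by positivity) 0)
  refine Summable.of_nonneg_of_le (fun j => (Real.rpow_pos_of_pos h0 _).le) (fun j => ?_) this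
  rw [Real.rpow_def_of_pos h0, pow_zero, one_mul, Real.exp_le_exp]
  have e : -Real.pi * (-Real.log q / (2 * Real.pi) * (j : ℝ) ^ 2 -
      2 * (|a| * -Real.log q / (2 * Real.pi)) * ((|j| : ℤ) : ℝ)) =
      -((-Real.log q) * ((1 / 2) * (j : ℝ) ^ 2 - |a| * |(j : ℝ)|)) := by
    push_cast; field_simp; ring
  rw [e]
  have h3 : -(|a| * |(j : ℝ)|) ≤ a * j := by rw [← abs_mul]; exact neg_abs_le _
  have : (1 / 2) * (j : ℝ) ^ 2 - |a| * |(j : ℝ)| ≤ 1 / 2 * ((j : ℝ) + a) ^ 2 := by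
    nlinarith [sq_nonneg a]
  nlinarith [mul_le_mul_of_nonneg_left this hl.le]

lemma jtp_mult_add {q : ℝ} (h0 : 0 < q) (h1 : q < 1) (b : ℝ) :
    Multipliable fun k : ℕ => 1 + q ^ ((k : ℝ) + b) := by
  apply multipliable_one_add_of_summable
  have : Summable fun k : ℕ => q ^ k * q ^ b :=
    (summable_geometric_of_lt_one h0.le h1).mul_right _
  refine this.congr fun k => ?_
  rw [Real.norm_of_nonneg (Real.rpow_pos_of_pos h0 _).le, Real.rpow_add h0, Real.rpow_natCast]

lemma jtp {q : ℝ} (h0 : 0 < q) (h1 : q < 1) (a : ℝ) :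
    ∑' j : ℤ, q ^ ((1 / 2 : ℝ) * ((j : ℝ) + a) ^ 2) =
      q ^ ((1 / 2 : ℝ) * a ^ 2) * (∏' k : ℕ, (1 - q ^ (k + 1))) *
       ((∏' k : ℕ, (1 + q ^ ((k : ℝ) + (1 / 2 + a)))) * ∏' k : ℕ, (1 + q ^ ((k : ℝ) + (1 / 2 - a)))) := by
  set L := ∏' k : ℕ, (1 - q ^ (k + 1)) with hL
  have hLp : 0 < L := jtp_lim_pos h0 h1
  have t1 := tendsto_tsum_of_dominated_convergence (𝓕 := atTop)
    (f := fun (n : ℕ) (j : ℤ) => jtpP q (2 * n) * jtpR q ((n : ℤ) - j) * jtpR q ((n : ℤ) + j)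
        * q ^ ((1 / 2 : ℝ) * ((j : ℝ) + a) ^ 2))
    (g := fun j : ℤ => L * L⁻¹ * L⁻¹ * q ^ ((1 / 2 : ℝ) * ((j : ℝ) + a) ^ 2))
    (bound := fun j : ℤ => 1 * L⁻¹ * L⁻¹ * q ^ ((1 / 2 : ℝ) * ((j : ℝ) + a) ^ 2))
    ((jtp_summable_gauss h0 h1 a).mul_left _)
    (fun j => by
      refine Tendsto.mul_const _ (Tendsto.mul (Tendsto.mul ?_ ?_) ?_)
      · exact (jtpP_tendsto h0 h1).comp (tendsto_id.const_mul_atTop' (by norm_num))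
      · simpa only [← sub_eq_add_neg] using jtpR_tendsto h0 h1 (-j)
      · exact jtpR_tendsto h0 h1 j)
    (Eventually.of_forall fun n j => by
      have hg := (Real.rpow_pos_of_pos h0 ((1 / 2 : ℝ) * ((j : ℝ) + a) ^ 2)).le
      have a1 := (jtpP_pos h0 h1 (2 * n)).le
      have a2 := jtpR_nonneg h0 h1 ((n : ℤ) - j)
      have a3 := jtpR_nonneg h0 h1 ((n : ℤ) + j)
      have b1 : jtpP q (2 * n) ≤ 1 := by
        simpa [jtpP] using jtpP_anti h0 h1 (Nat.zero_le (2 * n))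
      have b2 := jtpR_le h0 h1 ((n : ℤ) - j)
      have b3 := jtpR_le h0 h1 ((n : ℤ) + j)
      rw [Real.norm_of_nonneg (by positivity)]
      gcongr)
  simp only [(jtp_finite h0 h1 a _).tsum_eq] at t1
  have m1 : Tendsto (fun n : ℕ => ∏ k ∈ Finset.range n, (1 + q ^ ((k : ℝ) + 1 / 2 + a))) atTop
      (𝓝 (∏' k : ℕ, (1 + q ^ ((k : ℝ) + (1 / 2 + a))))) := by
    simpa [add_assoc] using (jtp_mult_add h0 h1 (1 / 2 + a)).hasProd.tendsto_prod_nat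
  have m2 : Tendsto (fun n : ℕ => ∏ k ∈ Finset.range n, (1 + q ^ ((k : ℝ) + 1 / 2 - a))) atTop
      (𝓝 (∏' k : ℕ, (1 + q ^ ((k : ℝ) + (1 / 2 - a))))) := by
    simpa [add_sub_assoc] using (jtp_mult_add h0 h1 (1 / 2 - a)).hasProd.tendsto_prod_nat
  have := tendsto_nhds_unique t1 ((m1.mul m2).const_mul _)
  rw [tsum_mul_left, mul_inv_cancel₀ hLp.ne', one_mul] at this
  rw [inv_mul_eq_iff_eq_mul₀ hLp.ne'] at this
  rw [this]
  ring

lemma pi_sum (n : ℕ) (f : Fin n → ℤ → ℝ) (h0 : ∀ i j, 0 ≤ f i j) (hs : ∀ i, Summable (f i)) :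
    HasSum (fun x : Fin n → ℤ => ∏ i, f i (x i)) (∏ i, ∑' j, f i j) := by
  induction n with
  | zero => simp
  | succ n ih =>
    have h := ih (fun i => f i.succ) (fun i => h0 _) (fun i => hs _)
    have hn : 0 ≤ fun x : Fin n → ℤ => ∏ i, f i.succ (x i) := by
      intro x
      exact Finset.prod_nonneg fun i _ => h0 i.succ (x i)
    have hn0 : 0 ≤ f 0 := by
      intro x
      exact h0 0 x
    have hm := Summable.mul_of_nonneg (hs 0) h.summable hn0 hn
    have h2 := HasSum.mul (hs 0).hasSum h hm
    rw [Fin.prod_univ_succ]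
    refine (Fin.consEquiv (fun _ => ℤ)).hasSum_iff.1 ?_
    refine Eq.subst (motive := fun g => HasSum g _) ?_ h2
    funext x
    simp [Fin.prod_univ_succ, Fin.consEquiv]

lemma euler {p : ℝ} (h0 : 0 < p) (h1 : p < 1) :
    (∏' k : ℕ, (1 + p ^ (k + 1))) * ∏' k : ℕ, (1 - p ^ (2 * k + 1)) = 1 := by
  have hp2 : p ^ 2 < 1 := pow_lt_one₀ h0.le h1 two_ne_zero
  have m1 := jtp_multipliable_sub h0 h1
  have m2 : Multipliable fun k : ℕ => 1 + p ^ (k + 1) := by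
    apply multipliable_one_add_of_summable; simpa using jtp_summable_pow h0 h1
  have m3 : Multipliable fun k : ℕ => 1 - p ^ (2 * k + 1) := by
    have : Multipliable fun k : ℕ => 1 + -p ^ (2 * k + 1) := by
      apply multipliable_one_add_of_summable
      exact (jtp_summable_pow h0 h1).comp_injective (i := fun k : ℕ => 2 * k)
        (fun a b h => by simpa using h)
    simpa [sub_eq_add_neg] using this
  have m4 : Multipliable fun k : ℕ => 1 - p ^ (2 * k + 1 + 1) := by
    refine (jtp_multipliable_sub (pow_pos h0 2) hp2).congr fun k => ?_
    rw [← pow_mul]; ring_nf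
  have e1 := tprod_even_mul_odd (f := fun k => 1 - p ^ (k + 1)) m3 m4
  have e2 := m2.tprod_mul m1
  have e3 : ∀ k : ℕ, (1 + p ^ (k + 1)) * (1 - p ^ (k + 1)) = 1 - p ^ (2 * k + 1 + 1) := by
    intro k; ring
  simp only [e3] at e2
  rw [e2, ← mul_assoc] at e1
  have hne := jtp_ne_zero h0 h1
  have : ((∏' k : ℕ, (1 - p ^ (2 * k + 1))) * ∏' k : ℕ, (1 + p ^ (k + 1))) *
    (∏' k : ℕ, (1 - p ^ (k + 1))) = 1 * ∏' k : ℕ, (1 - p ^ (k + 1)) := by rw [e1, one_mul]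
  rw [mul_comm]; exact mul_right_cancel₀ hne this

lemma residue {p : ℝ} (h0 : 0 < p) (h1 : p < 1) (M : ℕ) (hM : 0 < M) :
    ∏ s ∈ Finset.range M, ∏' m : ℕ, (1 + p ^ (M * m + s)) = ∏' k : ℕ, (1 + p ^ k) := by
  have hs : Summable fun k : ℕ => ‖p ^ k‖ := by
    simpa [abs_of_pos h0] using summable_geometric_of_lt_one h0.le h1
  have m1 : Multipliable fun k : ℕ => 1 + p ^ k := multipliable_one_add_of_summable hs
  have m2 : ∀ s, Multipliable fun m : ℕ => 1 + p ^ (M * m + s) := fun s => by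
    apply multipliable_one_add_of_summable
    exact hs.comp_injective (i := fun k : ℕ => M * k + s)
        (fun a b h => by simpa [hM.ne'] using h)
  have t1 := tendsto_finsetProd (Finset.range M) fun s _ => (m2 s).hasProd.tendsto_prod_nat
  have t2 := m1.hasProd.tendsto_prod_nat.comp (tendsto_id.const_mul_atTop' hM)
  refine tendsto_nhds_unique t1 (t2.congr fun n => ?_)
  simp only [Function.comp, id]
  rw [Finset.prod_comm]
  induction n with
  | zero => simp
  | succ n ih => rw [Finset.prod_range_succ, ← ih, Nat.mul_succ, Finset.prod_range_add]

lemma sq_sum (x : ℝ) (n : ℕ) : ∑ j ∈ Finset.range n, (x - (j : ℝ)) ^ 2 =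
    n * x ^ 2 - x * n * (n - 1) + (n - 1) * n * (2 * n - 1) / 6 := by
  induction n with
  | zero => simp
  | succ n ih => rw [Finset.sum_range_succ, ih]; push_cast; ring

lemma fin_prod_reindex (N : ℕ) (U : ℕ → ℝ) :
    (∏ j : Fin N, (U (2 * N - j) * U j)) * U N = (∏ s ∈ Finset.range (2 * N), U s) * U (2 * N) := by
  rw [← Finset.prod_range_succ, Fin.prod_univ_eq_prod_range (fun j => U (2 * N - j) * U j) N,
    Finset.prod_mul_distrib]
  have e : 2 * N + 1 = (N + 1) + N := by ring
  rw [e, Finset.prod_range_add, Finset.prod_range_succ,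
    ← Finset.prod_range_reflect (fun x => U (N + 1 + x))]
  have : ∏ x ∈ Finset.range N, U (2 * N - x) = ∏ x ∈ Finset.range N, U (N + 1 + (N - 1 - x)) := by
    apply Finset.prod_congr rfl
    intro x hx
    have := Finset.mem_range.1 hx
    congr 1; omega
  rw [this]; ring

set_option maxHeartbeats 1000000 in
theorem stmt10 (N : ℕ) (hN : 2 ≤ N) (q : ℝ) (hq0 : 0 < q) (hq1 : q < 1) :
    (∑' n : Fin N → ℤ,
        q ^ ((1 / 2 : ℝ) * ∑ j : Fin N, ((n j : ℝ) + ((N : ℝ) - (j.val : ℝ)) / (2 * N)) ^ 2)) *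
      (∏' k : ℕ, (1 + q ^ ((k : ℝ) + 1 / 2))) / ∏' k : ℕ, (1 - q ^ (k + 1)) ^ N =
      q ^ (((N : ℝ) + 1) * (2 * (N : ℝ) + 1) / (48 * N)) * 2 *
        (∏' k : ℕ, (1 + q ^ (k + 1))) / ∏' k : ℕ, (1 - q ^ ((2 * (k : ℝ) + 1) / (2 * N))) := by
  have hNp : (0 : ℝ) < N := by exact_mod_cast (by omega : 0 < N)
  obtain ⟨p, hp⟩ : ∃ p, p = q ^ (1 / (2 * N : ℝ)) := ⟨_, rfl⟩
  have hp0 : 0 < p := hp ▸ Real.rpow_pos_of_pos hq0 _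
  have hp1 : p < 1 := hp ▸ Real.rpow_lt_one hq0.le hq1 (by positivity)
  have hpow : ∀ (m : ℕ) (x : ℝ), x = m / (2 * N : ℝ) → q ^ x = p ^ m := by
    intro m x hx
    rw [hp, ← Real.rpow_natCast, ← Real.rpow_mul hq0.le, hx]; congr 1; ring
  set L := ∏' k : ℕ, (1 - q ^ (k + 1)) with hL
  have hLp : 0 < L := jtp_lim_pos hq0 hq1
  set U : ℕ → ℝ := fun s => ∏' m : ℕ, (1 + p ^ (2 * N * m + s)) with hU
  have hsum : ∑' n : Fin N → ℤ,
        q ^ ((1 / 2 : ℝ) * ∑ j : Fin N, ((n j : ℝ) + ((N : ℝ) - (j.val : ℝ)) / (2 * N)) ^ 2) =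
      q ^ (((N : ℝ) + 1) * (2 * (N : ℝ) + 1) / (48 * N)) * L ^ N *
        ∏ j : Fin N, (U (2 * N - j) * U j) := by
    have h := pi_sum N (fun j n => q ^ ((1 / 2 : ℝ) * ((n : ℝ) + ((N : ℝ) - (j.val : ℝ)) / (2 * N)) ^ 2))
      (fun i j => (Real.rpow_pos_of_pos hq0 _).le) (fun i => jtp_summable_gauss hq0 hq1 _)
    have h' := h.tsum_eq
    simp only [← Real.rpow_sum_of_pos hq0, ← Finset.mul_sum] at h'
    rw [h']
    have hj : ∀ j : Fin N, ∑' n : ℤ, q ^ ((1 / 2 : ℝ) * ((n : ℝ) + ((N : ℝ) - (j.val : ℝ)) / (2 * N)) ^ 2)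
        = q ^ ((1 / 2 : ℝ) * (((N : ℝ) - (j.val : ℝ)) / (2 * N)) ^ 2) * L * (U (2 * N - j) * U j) := by
      intro j
      rw [jtp hq0 hq1]
      congr 2
      · apply tprod_congr
        intro k
        rw [hpow (2 * N * k + (2 * N - j))]
        rw [Nat.cast_add, Nat.cast_sub (by omega)]
        push_cast; field_simp; ring
      · apply tprod_congr
        intro k
        rw [hpow (2 * N * k + j)]
        push_cast; field_simp; ring
    rw [Finset.prod_congr rfl fun j _ => hj j, Finset.prod_mul_distrib, Finset.prod_mul_distrib,
      ← Real.rpow_sum_of_pos hq0]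
    congr 2
    · congr 1
      simp only [div_pow]
      rw [← Finset.mul_sum, ← Finset.sum_div,
        Fin.sum_univ_eq_sum_range (fun j => ((N : ℝ) - (j : ℝ)) ^ 2) N, sq_sum]
      field_simp; ring
    · simp
  have hferm : ∏' k : ℕ, (1 + q ^ ((k : ℝ) + 1 / 2)) = U N := by
    apply tprod_congr
    intro k
    rw [hpow (2 * N * k + N)]
    push_cast; field_simp
  have hden : ∏' k : ℕ, (1 - q ^ (k + 1)) ^ N = L ^ N :=
    (jtp_multipliable_sub hq0 hq1).tprod_pow N
  have hlast : U (2 * N) = ∏' k : ℕ, (1 + q ^ (k + 1)) := by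
    apply tprod_congr
    intro k
    rw [← Real.rpow_natCast q, hpow (2 * N * k + 2 * N)]
    push_cast; field_simp
  have hodd : ∏' k : ℕ, (1 - q ^ ((2 * (k : ℝ) + 1) / (2 * N))) = ∏' k : ℕ, (1 - p ^ (2 * k + 1)) := by
    apply tprod_congr
    intro k
    rw [hpow (2 * k + 1)]
    push_cast; rfl
  have hres := residue hp0 hp1 (2 * N) (by omega)
  have m2 : Multipliable fun k : ℕ => 1 + p ^ (k + 1) := by
    apply multipliable_one_add_of_summable; simpa using jtp_summable_pow hp0 hp1
  rw [tprod_eq_zero_mul' m2, pow_zero] at hres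
  have hre := fin_prod_reindex N U
  rw [hlast] at hre
  have he := euler hp0 hp1
  rw [hsum, hferm, hden, hodd, mul_assoc, hre]
  change (∏ s ∈ Finset.range (2 * N), U s) = _ at hres
  rw [hres]
  have hne : ∏' k : ℕ, (1 - p ^ (2 * k + 1)) ≠ 0 := right_ne_zero_of_mul_eq_one he
  rw [div_eq_div_iff (by positivity) hne]
  linear_combination (2 * q ^ (((N : ℝ) + 1) * (2 * (N : ℝ) + 1) / (48 * N)) * L ^ N *
    ∏' k : ℕ, (1 + q ^ (k + 1))) * he
end

section
/- For every integer N ≥ 1 and every real q with 0 < q < 1: ∏_{k=1}^∞ ∏_{i=0}^{2N} (1 + q^(k − i/(2N))) = 2 · ∏_{k=1}^∞ (1 + q^k) / ∏_{k=1}^∞ (1 − q^((2k−1)/(2N))). -/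
open scoped BigOperators

lemma aux_sum (x : ℝ) (hx0 : 0 < x) (hx1 : x < 1) (a b : ℕ) (ha : 0 < a) :
    Summable fun k : ℕ => x ^ (a * k + b) := by
  simp only [pow_add, pow_mul]
  exact (summable_geometric_of_lt_one (by positivity) (pow_lt_one₀ hx0.le hx1 ha.ne')).mul_right _

lemma aux_add (x : ℝ) (hx0 : 0 < x) (hx1 : x < 1) (a b : ℕ) (ha : 0 < a) :
    Multipliable fun k : ℕ => 1 + x ^ (a * k + b) :=
  multipliable_one_add_of_summable (by
    simpa [abs_of_pos hx0] using aux_sum x hx0 hx1 a b ha)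

lemma aux_sub (x : ℝ) (hx0 : 0 < x) (hx1 : x < 1) (a b : ℕ) (ha : 0 < a) :
    Multipliable fun k : ℕ => 1 - x ^ (a * k + b) := by
  simp only [sub_eq_add_neg]
  exact multipliable_one_add_of_summable (by
    simpa [abs_of_pos hx0] using aux_sum x hx0 hx1 a b ha)

lemma aux_ne (x : ℝ) (hx0 : 0 < x) (hx1 : x < 1) (a b : ℕ) (ha : 0 < a) (hb : 0 < b) :
    ∏' k : ℕ, (1 - x ^ (a * k + b)) ≠ 0 := by
  simp only [sub_eq_add_neg]
  refine tprod_one_add_ne_zero_of_summable (f := fun k : ℕ => - x ^ (a * k + b)) ?_ ?_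
  · intro k
    have : x ^ (a * k + b) < 1 := pow_lt_one₀ hx0.le hx1 (by omega)
    linarith
  · simpa [abs_of_pos hx0] using aux_sum x hx0 hx1 a b ha

lemma aux_euler (x : ℝ) (hx0 : 0 < x) (hx1 : x < 1) :
    (∏' k : ℕ, (1 + x ^ (k + 1))) * ∏' k : ℕ, (1 - x ^ (2 * k + 1)) = 1 := by
  have hA := aux_add x hx0 hx1 1 1 one_pos
  have hE := aux_sub x hx0 hx1 1 1 one_pos
  simp only [one_mul] at hA hE
  have hO := aux_sub x hx0 hx1 2 1 two_pos
  have hV := aux_sub x hx0 hx1 2 2 two_pos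
  have h0 := aux_ne x hx0 hx1 2 2 two_pos two_pos
  have h1 := tprod_even_mul_odd (f := fun k : ℕ => 1 - x ^ (k + 1)) hO hV
  have h2 := hA.tprod_mul hE
  have h3 : ∀ k : ℕ, (1 + x ^ (k + 1)) * (1 - x ^ (k + 1)) = 1 - x ^ (2 * k + 2) := by
    intro k; ring
  simp only [h3] at h2
  rw [← h1] at h2
  apply mul_right_cancel₀ h0
  rw [one_mul, mul_assoc]
  exact h2.symm

/-- Product rearrangement in the principal specialization of the level-one
    vacuum-plus-vector character of affine `so(2N+1)`:
    `∏_{k≥1} ∏_{i=0}^{2N} (1 + q^(k − i/(2N))) = 2·∏_{k≥1}(1+q^k)/∏_{k≥1}(1−q^((2k−1)/(2N)))`. -/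
theorem stmt17 (N : ℕ) (hN : 1 ≤ N) (q : ℝ) (hq0 : 0 < q) (hq1 : q < 1) :
    (∏' k : ℕ, ∏ i ∈ Finset.range (2 * N + 1), (1 + q ^ (((k : ℝ) + 1) - (i : ℝ) / (2 * N)))) =
      2 * (∏' k : ℕ, (1 + q ^ (k + 1))) /
        ∏' k : ℕ, (1 - q ^ ((2 * (k : ℝ) + 1) / (2 * N))) := by
  have hN' : (0 : ℝ) < N := by exact_mod_cast hN
  obtain ⟨x, hx⟩ : ∃ x : ℝ, x = q ^ (1 / (2 * N : ℝ)) := ⟨_, rfl⟩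
  have hx0 : 0 < x := hx ▸ Real.rpow_pos_of_pos hq0 _
  have hx1 : x < 1 := hx ▸ Real.rpow_lt_one hq0.le hq1 (by positivity)
  have key : ∀ (m : ℕ) (y : ℝ), y * (2 * N) = m → q ^ y = x ^ m := by
    intro m y h
    rw [hx, ← Real.rpow_natCast, ← Real.rpow_mul hq0.le, ← h]
    congr 1
    field_simp
  have hO : ∀ k : ℕ, q ^ ((2 * (k : ℝ) + 1) / (2 * N)) = x ^ (2 * k + 1) := by
    intro k
    apply key
    push_cast
    field_simp
  have hblock : ∀ k : ℕ, ∏ i ∈ Finset.range (2 * N + 1),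
      (1 + q ^ (((k : ℝ) + 1) - (i : ℝ) / (2 * N))) =
      (∏ j ∈ Finset.range (2 * N), (1 + x ^ (2 * N * k + (j + 1)))) * (1 + q ^ k) := by
    intro k
    rw [Finset.prod_range_succ]
    congr 1
    · rw [← Finset.prod_range_reflect]
      apply Finset.prod_congr rfl
      intro j hj
      rw [Finset.mem_range] at hj
      congr 1
      apply key
      have : ((2 * N - 1 - j : ℕ) : ℝ) = 2 * N - 1 - j := by
        rw [Nat.sub_sub, Nat.cast_sub (by omega)]
        push_cast; ring
      rw [this]
      push_cast
      field_simp
      ring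
    · rw [← Real.rpow_natCast]
      congr 2
      push_cast
      field_simp
      ring
  have hfin : ∀ n : ℕ, ∏ k ∈ Finset.range n, ∏ j ∈ Finset.range (2 * N),
      (1 + x ^ (2 * N * k + (j + 1))) = ∏ m ∈ Finset.range (2 * N * n), (1 + x ^ (m + 1)) := by
    intro n
    induction n with
    | zero => simp
    | succ n ih =>
      rw [Finset.prod_range_succ, ih, Nat.mul_succ, Finset.prod_range_add]
      simp only [add_assoc]
  have hB : Multipliable fun k : ℕ => ∏ j ∈ Finset.range (2 * N),
      (1 + x ^ (2 * N * k + (j + 1))) :=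
    multipliable_prod fun j _ => aux_add x hx0 hx1 (2 * N) (j + 1) (by omega)
  have hA := aux_add x hx0 hx1 1 1 one_pos
  have hQ := aux_add q hq0 hq1 1 0 one_pos
  have hQ1 := aux_add q hq0 hq1 1 1 one_pos
  simp only [one_mul, add_zero] at hA hQ hQ1
  have hBt : ∏' k : ℕ, ∏ j ∈ Finset.range (2 * N), (1 + x ^ (2 * N * k + (j + 1))) =
      ∏' m : ℕ, (1 + x ^ (m + 1)) := by
    have t1 := hB.hasProd.tendsto_prod_nat
    simp only [hfin] at t1
    have t2 : Filter.Tendsto (fun n : ℕ => 2 * N * n) Filter.atTop Filter.atTop :=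
      Filter.tendsto_atTop_mono (fun n => Nat.le_mul_of_pos_left n (by omega)) Filter.tendsto_id
    have t3 := hA.hasProd.tendsto_prod_nat.comp t2
    simp only [Function.comp_def] at t3
    exact tendsto_nhds_unique t1 t3
  have hQt : ∏' k : ℕ, (1 + q ^ k) = 2 * ∏' k : ℕ, (1 + q ^ (k + 1)) := by
    have h := tprod_eq_zero_mul' (f := fun k : ℕ => 1 + q ^ k) hQ1
    simp only [pow_zero] at h
    rw [h]
    norm_num
  simp only [hblock, hO]
  rw [hB.tprod_mul hQ, hBt, hQt, eq_div_iff (aux_ne x hx0 hx1 2 1 two_pos one_pos)]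
  linear_combination (2 * ∏' k : ℕ, (1 + q ^ (k + 1))) * aux_euler x hx0 hx1
end
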